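/- Let K be a finite proper pre-cubical set with height function, v,w vertices, and c, c' two cube chains from v to w. If some natural tame path lies in both c and c', then there is a cube chain c∩c' from v to w such that a natural tame path lies in c∩c' if and only if it lies in both c and c'. Moreover, c∩c' ≤ c and c∩c' ≤ c'. -/

import Mathlib

/-- A pre-cubical set: a family of sets of `n`-cubes with face maps
`dᵢᵉ : K[n+1] → K[n]` (indices `i` are 0-based here) satisfying the
pre-cubical relations `dᵢᵉ dⱼᶯ = dⱼ₋₁ᶯ dᵢᵉ` for `i < j`. -/
structure PCS where
  cube : ℕ → Type
  face : Bool → ∀ {n : ℕ}, Fin (n + 1) → cube (n + 1) → cube n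
  comm : ∀ {n : ℕ} (ε η : Bool) (i : Fin (n + 1)) (j : Fin (n + 2)),
    (i : ℕ) < (j : ℕ) → ∀ c : cube (n + 2),
    face ε i (face η j c) =
      face η ⟨(j : ℕ) - 1, by omega⟩ (face ε ⟨(i : ℕ), by omega⟩ c)

/-- The number of `*`'s (encoded as `none`) of a function `f : {1,…,n} → {0,1,*}`. -/
def numStars {n : ℕ} (f : Fin n → Option Bool) : ℕ := ∑ i, if f i = none then 1 else 0

lemma numStars_castSucc {n : ℕ} (f : Fin (n + 1) → Option Bool) :
    numStars f = numStars (f ∘ Fin.castSucc) + (if f (Fin.last n) = none then 1 else 0) := by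
  unfold numStars
  rw [Fin.sum_univ_castSucc]
  rfl

/-- Auxiliary for `dface`: the last `k` coordinates are untouched. -/
def PCS.dfaceAux (K : PCS) : ∀ (n k : ℕ) (f : Fin n → Option Bool),
    K.cube (n + k) → K.cube (numStars f + k)
  | 0, _, _, c => cast (congrArg K.cube (by simp [numStars])) c
  | n + 1, k, f, c =>
    match h : f (Fin.last n) with
    | some ε =>
        cast (congrArg K.cube (by rw [numStars_castSucc f, h]; simp))
          (K.dfaceAux n k (f ∘ Fin.castSucc)
            (K.face ε ⟨n, by omega⟩ (cast (congrArg K.cube (by omega)) c)))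
    | none =>
        cast (congrArg K.cube (by rw [numStars_castSucc f, h]; simp; omega))
          (K.dfaceAux n (k + 1) (f ∘ Fin.castSucc) (cast (congrArg K.cube (by omega)) c))

/-- `d_f(c)` : the composition `d₁^{f(1)} ⋯ d_n^{f(n)}` of face maps, where
`f i = some ε` means apply `dᵢᵉ` and `f i = none` means `dᵢ^*` (identity). -/
def PCS.dface (K : PCS) {n : ℕ} (f : Fin n → Option Bool) (c : K.cube n) :
    K.cube (numStars f) :=
  cast (congrArg K.cube (by omega)) (K.dfaceAux n 0 f (cast (congrArg K.cube (by omega)) c))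

/-- `dᵉ(c)`: the extreme vertex of a cube. -/
def PCS.extreme (K : PCS) (ε : Bool) {n : ℕ} (c : K.cube n) : K.cube 0 :=
  cast (congrArg K.cube (by simp [numStars])) (K.dface (fun _ => some ε) c)

/-- A pre-cubical set is proper if cubes are distinguished by their
pairs of extreme vertices. -/
def PCS.Proper (K : PCS) : Prop :=
  Function.Injective fun c : Σ n, K.cube n =>
    ({K.extreme false c.2, K.extreme true c.2} : Set (K.cube 0))

/-- `chainFrom K v cs w`: the list of (positive-dimensional) cubes `cs` is
a cube chain from the vertex `v` to the vertex `w`. -/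
def PCS.chainFrom (K : PCS) : K.cube 0 → List (Σ n, K.cube (n + 1)) → K.cube 0 → Prop
  | v, [], w => v = w
  | v, c :: cs, w => K.extreme false c.2 = v ∧ K.chainFrom (K.extreme true c.2) cs w

/-- The set of cube chains in `K` from `v` to `w`. -/
def CubeChain (K : PCS) (v w : K.cube 0) :=
  {cs : List (Σ n, K.cube (n + 1)) // K.chainFrom v cs w}

/-- `IsSplit K c c₁ c₂`: `(c₁, c₂) = (d⁰_Ā(c), d¹_A(c))` for some `∅ ≠ A ⊊ {1,…,n}`. -/
def PCS.IsSplit (K : PCS) {n : ℕ} (c : K.cube (n + 1)) (c₁ c₂ : Σ m, K.cube (m + 1)) : Prop :=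
  ∃ A : Finset (Fin (n + 1)), A ≠ ∅ ∧ A ≠ Finset.univ ∧
    HEq c₁.2 (K.dface (fun i => if i ∈ A then none else some false) c) ∧
    HEq c₂.2 (K.dface (fun i => if i ∈ A then some true else none) c)

/-- One splitting step `𝐜 ↦ d_{k,A}(𝐜)`: replace the `k`-th cube by its two halves. -/
def PCS.SplitStep (K : PCS) (cs cs' : List (Σ n, K.cube (n + 1))) : Prop :=
  ∃ (l₁ l₂ : List (Σ n, K.cube (n + 1))) (c c₁ c₂ : Σ n, K.cube (n + 1)),
    cs = l₁ ++ c :: l₂ ∧ cs' = l₁ ++ c₁ :: c₂ :: l₂ ∧ K.IsSplit c.2 c₁ c₂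

/-- The relation on cube chains generated by `d_{k,A}(𝐜) ≤ 𝐜`. -/
def chainLe {K : PCS} {v w : K.cube 0} (a b : CubeChain K v w) : Prop :=
  Relation.ReflTransGen (fun x y : CubeChain K v w => K.SplitStep y.1 x.1) a b

/-- A height function on `K`: `h(dᵢᵉ(c)) = h(c) + ε`. -/
def PCS.IsHeight (K : PCS) (h : ∀ {n : ℕ}, K.cube n → ℤ) : Prop :=
  ∀ {n : ℕ} (ε : Bool) (i : Fin (n + 1)) (c : K.cube (n + 1)),
    h (K.face ε i c) = h c + (if ε then 1 else 0)

/-- Cubes form a discrete space. -/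
instance PCS.cubeTop (K : PCS) (n : ℕ) : TopologicalSpace (K.cube n) := ⊥

/-- The disjoint union `∐ₙ K[n] × [0,1]ⁿ`. -/
def PCS.Pre (K : PCS) : Type := Σ n, K.cube n × (Fin n → unitInterval)

instance (K : PCS) : TopologicalSpace K.Pre := by unfold PCS.Pre; infer_instance

/-- The identifications `(dᵢᵉ(c), x) ∼ (c, δᵢᵉ(x))` of the geometric realization. -/
def PCS.geoRel (K : PCS) : K.Pre → K.Pre → Prop := fun x y =>
  ∃ (n : ℕ) (ε : Bool) (i : Fin (n + 1)) (c : K.cube (n + 1)) (t : Fin n → unitInterval),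
    (x = ⟨n, K.face ε i c, t⟩ ∧ y = ⟨n + 1, c, i.insertNth (if ε then 1 else 0) t⟩) ∨
    (y = ⟨n, K.face ε i c, t⟩ ∧ x = ⟨n + 1, c, i.insertNth (if ε then 1 else 0) t⟩)

/-- The geometric realization `|K|` (as a topological space). -/
def PCS.Geo (K : PCS) : Type := Quot K.geoRel

instance (K : PCS) : TopologicalSpace K.Geo := by unfold PCS.Geo; infer_instance

/-- The point of `|K|` corresponding to a vertex. -/
def PCS.vpt (K : PCS) (u : K.cube 0) : K.Geo :=
  Quot.mk K.geoRel ⟨0, u, Fin.elim0⟩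

/-- `|c| ⊆ |K|`, the (closed) geometric cube of a cube `c`. -/
def PCS.cubeSet (K : PCS) {n : ℕ} (c : K.cube n) : Set K.Geo :=
  Set.range fun x : Fin n → unitInterval => Quot.mk K.geoRel ⟨n, c, x⟩

/-- A directed path on `|K|` defined on `[a,b]`: continuous, and piecewise of
the form `α(s) = (cⱼ, βⱼ(s))` with all coordinates of `βⱼ` non-decreasing. -/
def PCS.IsDPathOn (K : PCS) (α : ℝ → K.Geo) (a b : ℝ) : Prop :=
  ContinuousOn α (Set.Icc a b) ∧
  ∃ (m : ℕ) (t : Fin (m + 1) → ℝ), Monotone t ∧ t 0 = a ∧ t (Fin.last m) = b ∧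
    ∀ j : Fin m, ∃ (n : ℕ) (c : K.cube n) (β : ℝ → Fin n → unitInterval),
      (∀ i : Fin n,
        MonotoneOn (fun s => (β s i : ℝ)) (Set.Icc (t j.castSucc) (t j.succ))) ∧
      ∀ s ∈ Set.Icc (t j.castSucc) (t j.succ), α s = Quot.mk K.geoRel ⟨n, c, β s⟩

/-- `α` is natural on `[a,b]`: the height of `α(s)` equals `s`
(stated for every representative of `α(s)`). -/
def PCS.NaturalOn (K : PCS) (h : ∀ {n : ℕ}, K.cube n → ℤ) (α : ℝ → K.Geo)
    (a b : ℝ) : Prop :=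
  ∀ s ∈ Set.Icc a b, ∀ (n : ℕ) (c : K.cube n) (x : Fin n → unitInterval),
    Quot.mk K.geoRel ⟨n, c, x⟩ = α s → (h c : ℝ) + ∑ i, (x i : ℝ) = s

/-- `α` is tame on `[a,b]`: each segment either stays in a single cube or
passes through a vertex. -/
def PCS.TameOn (K : PCS) (α : ℝ → K.Geo) (a b : ℝ) : Prop :=
  ∀ s t : ℝ, a ≤ s → s < t → t ≤ b →
    (∃ (n : ℕ) (c : K.cube n), Set.MapsTo α (Set.Icc s t) (K.cubeSet c)) ∨
    (∃ u : K.cube 0, K.vpt u ∈ α '' Set.Icc s t)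

/-- A natural tame (directed) path in `|K|` from `v` to `w`, where
`h(v) = 0` and `h(w) = N`. -/
def PCS.NatTamePath (K : PCS) (h : ∀ {n : ℕ}, K.cube n → ℤ) (v w : K.cube 0)
    (N : ℕ) (α : ℝ → K.Geo) : Prop :=
  K.IsDPathOn α 0 N ∧ α 0 = K.vpt v ∧ α N = K.vpt w ∧
    K.NaturalOn h α 0 N ∧ K.TameOn α 0 N

/-- `b_i`, the partial sums of the dimensions of the cubes of a chain. -/
def bsum {K : PCS} (cs : List (Σ n, K.cube (n + 1))) (i : ℕ) : ℝ :=
  ((cs.take i).map fun c => (c.1 : ℝ) + 1).sum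

/-- `α` lies in the cube chain `cs`: `α([b_{i−1}, b_i]) ⊆ |cᵢ|`. -/
def PCS.liesIn (K : PCS) (α : ℝ → K.Geo) (cs : List (Σ n, K.cube (n + 1))) : Prop :=
  ∀ (i : ℕ) (hi : i < cs.length),
    Set.MapsTo α (Set.Icc (bsum cs i) (bsum cs (i + 1)))
      (K.cubeSet (cs.get ⟨i, hi⟩).2)

/-!
Let `x` and `y` be the first cubes of `c` and `c'`, where `x` has at most the dimension of `y`. If
`x = y`, pass to the tails. Otherwise a natural path in both chains is, at the height of the upper
vertex of `x`, equal to that vertex, which is therefore a vertex of `y`. By properness `x` is the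
face of `y` spanned by the lower vertex of `y` and that vertex, so that `y` splits as `x, q`. Along
a natural path in `|y|` the lower vertex of the carrier can only move up, so a natural path in `|y|`
that has passed through the upper vertex of `x` stays in `|q|`. Hence replacing `y` by `x, q` in
`c'` does not change which natural paths lie in both chains, and the first cubes now agree.
-/

namespace PCS

variable {K : PCS}

/-! ### Faces of cubes -/

/-- The cubes of `K` of all dimensions. Equality in this sigma type absorbs the dimension casts
in `dface` and `extreme`. -/
abbrev Cell (K : PCS) : Type := Σ n, K.cube n

/-- The face map `dᵢᵉ` as a self-map of `K.Cell`, by convention the identity on cubes of dimension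
at most `i`. -/
def faceAt (K : PCS) (ε : Bool) (i : ℕ) : K.Cell → K.Cell
  | ⟨0, c⟩ => ⟨0, c⟩
  | ⟨n + 1, c⟩ => if h : i < n + 1 then ⟨n, K.face ε ⟨i, h⟩ c⟩ else ⟨n + 1, c⟩

lemma faceAt_of_lt (ε : Bool) {i n : ℕ} (c : K.cube (n + 1)) (h : i < n + 1) :
    K.faceAt ε i ⟨n + 1, c⟩ = ⟨n, K.face ε ⟨i, h⟩ c⟩ := by
  simp [faceAt, h]

lemma faceAt_of_le (ε : Bool) {i : ℕ} {c : K.Cell} (h : c.1 ≤ i) : K.faceAt ε i c = c := by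
  obtain ⟨_ | n, c⟩ := c
  · rfl
  · simp [faceAt, not_lt.2 h]

lemma dim_faceAt_add_one (ε : Bool) {i : ℕ} {c : K.Cell} (h : i < c.1) :
    (K.faceAt ε i c).1 + 1 = c.1 := by
  obtain ⟨_ | n, c⟩ := c
  · exact absurd h (Nat.not_lt_zero i)
  · rw [faceAt_of_lt ε c h]

lemma faceAt_faceAt (ε η : Bool) {i j : ℕ} (hij : i < j) (c : K.Cell) :
    K.faceAt ε i (K.faceAt η j c) = K.faceAt η (j - 1) (K.faceAt ε i c) := by
  rcases le_or_gt c.1 j with hj | hj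
  · rw [faceAt_of_le η hj, faceAt_of_le η]
    rcases le_or_gt c.1 i with hi | hi
    · rw [faceAt_of_le ε hi]
      omega
    · have := dim_faceAt_add_one ε hi
      omega
  · obtain ⟨_ | _ | n, c⟩ := c
    · exact absurd hj (Nat.not_lt_zero j)
    · exact absurd (Nat.lt_one_iff.1 hj ▸ hij) (Nat.not_lt_zero i)
    · change j < n + 2 at hj
      rw [faceAt_of_lt η c hj, faceAt_of_lt ε c (hij.trans hj), faceAt_of_lt ε _ (by omega),
        faceAt_of_lt η _ (by omega)]
      exact congrArg _ (K.comm ε η ⟨i, by omega⟩ ⟨j, hj⟩ hij c)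

/-- The composition `d₀^{f(0)} ⋯ d_{n-1}^{f(n-1)}` of face maps, where `f i = none` stands for the
identity. -/
def faceBelow (K : PCS) : ℕ → (ℕ → Option Bool) → K.Cell → K.Cell
  | 0, _, c => c
  | n + 1, f, c => match f n with
    | some ε => faceBelow K n f (K.faceAt ε n c)
    | none => faceBelow K n f c

section faceBelow

variable {n : ℕ} {f : ℕ → Option Bool}

lemma faceBelow_succ_of_some {ε : Bool} (h : f n = some ε) (c : K.Cell) :
    K.faceBelow (n + 1) f c = K.faceBelow n f (K.faceAt ε n c) := by
  simp [faceBelow, h]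

lemma faceBelow_succ_of_none (h : f n = none) (c : K.Cell) :
    K.faceBelow (n + 1) f c = K.faceBelow n f c := by
  simp [faceBelow, h]

lemma faceBelow_congr {g : ℕ → Option Bool} (h : ∀ i < n, f i = g i) (c : K.Cell) :
    K.faceBelow n f c = K.faceBelow n g c := by
  induction n generalizing c with
  | zero => rfl
  | succ n ih =>
    have ih := ih fun i hi ↦ h i (Nat.lt_succ_of_lt hi)
    have hn := h n n.lt_succ_self
    cases hf : f n with
    | none => rw [faceBelow_succ_of_none hf, faceBelow_succ_of_none (hn ▸ hf), ih]
    | some ε => rw [faceBelow_succ_of_some hf, faceBelow_succ_of_some (hn ▸ hf), ih]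

lemma faceBelow_none (n : ℕ) (c : K.Cell) : K.faceBelow n (fun _ ↦ none) c = c := by
  induction n with
  | zero => rfl
  | succ n ih => rw [faceBelow_succ_of_none rfl, ih]

lemma faceBelow_faceAt {g : ℕ → Option Bool} {ε : Bool} {i : ℕ} (hi : i ≤ n)
    (h_lt : ∀ k < i, g k = f k) (h_eq : g i = some ε)
    (h_ge : ∀ k, i ≤ k → k < n → g (k + 1) = f k) (c : K.Cell) :
    K.faceBelow n f (K.faceAt ε i c) = K.faceBelow (n + 1) g c := by
  induction n generalizing c with
  | zero =>
    obtain rfl : i = 0 := Nat.le_zero.1 hi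
    rw [faceBelow_succ_of_some h_eq]
    rfl
  | succ n ih =>
    rcases hi.eq_or_lt with rfl | hin
    · rw [faceBelow_succ_of_some h_eq]
      exact faceBelow_congr (fun k hk ↦ (h_lt k hk).symm) _
    · have ih := ih (Nat.lt_succ_iff.1 hin) fun k hk hk' ↦ h_ge k hk (Nat.lt_succ_of_lt hk')
      have hn := h_ge n (Nat.lt_succ_iff.1 hin) n.lt_succ_self
      cases hf : f n with
      | none => rw [faceBelow_succ_of_none hf, faceBelow_succ_of_none (hn.trans hf), ih]
      | some η =>
        rw [faceBelow_succ_of_some hf, faceBelow_succ_of_some (hn.trans hf), ← ih,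
          faceAt_faceAt ε η hin, Nat.add_sub_cancel]

/-- The number of stars (encoded as `none`) of `f` at positions below `n`. -/
def starCount (f : ℕ → Option Bool) (n : ℕ) : ℕ := Nat.count (fun k ↦ f k = none) n

lemma starCount_succ_of_none (h : f n = none) : starCount f (n + 1) = starCount f n + 1 := by
  simp [starCount, Nat.count_succ, h]

lemma starCount_succ_of_some {ε : Bool} (h : f n = some ε) :
    starCount f (n + 1) = starCount f n := by
  simp [starCount, Nat.count_succ, h]

lemma dim_faceBelow {c : K.Cell} (h : n ≤ c.1) :
    (K.faceBelow n f c).1 + n = c.1 + starCount f n := by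
  induction n generalizing c with
  | zero => simp [faceBelow, starCount]
  | succ n ih =>
    cases hf : f n with
    | none =>
      have := ih (c := c) (by omega)
      rw [faceBelow_succ_of_none hf, starCount_succ_of_none hf]
      omega
    | some ε =>
      have hd := dim_faceAt_add_one ε h
      have := ih (c := K.faceAt ε n c) (by omega)
      rw [faceBelow_succ_of_some hf, starCount_succ_of_some hf]
      omega

lemma faceAt_faceBelow (ε : Bool) (m : ℕ) (c : K.Cell) :
    K.faceAt ε (starCount f n + m) (K.faceBelow n f c) =
      K.faceBelow n f (K.faceAt ε (n + m) c) := by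
  induction n generalizing c m with
  | zero => simp [faceBelow, starCount]
  | succ n ih =>
    cases hf : f n with
    | none =>
      rw [faceBelow_succ_of_none hf, faceBelow_succ_of_none hf, starCount_succ_of_none hf,
        add_assoc, ih, add_assoc]
    | some η =>
      rw [faceBelow_succ_of_some hf, faceBelow_succ_of_some hf, starCount_succ_of_some hf, ih,
        faceAt_faceAt η ε (by omega : n < n + 1 + m)]
      congr 2
      omega

/-- The signs `f` with the `k`-th star replaced by `g k`: the signs of an iterated face. -/
def fillStars (f g : ℕ → Option Bool) (i : ℕ) : Option Bool :=
  if f i = none then g (starCount f i) else f i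

lemma faceBelow_faceBelow (f g : ℕ → Option Bool) (n : ℕ) (c : K.Cell) :
    K.faceBelow (starCount f n) g (K.faceBelow n f c) = K.faceBelow n (fillStars f g) c := by
  induction n generalizing c with
  | zero => rfl
  | succ n ih =>
    cases hf : f n with
    | some ε =>
      have hfg : fillStars f g n = some ε := by simp [fillStars, hf]
      rw [faceBelow_succ_of_some hf, faceBelow_succ_of_some hfg, starCount_succ_of_some hf, ih]
    | none =>
      have hfg : fillStars f g n = g (starCount f n) := by simp [fillStars, hf]
      rw [faceBelow_succ_of_none hf, starCount_succ_of_none hf]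
      cases hg : g (starCount f n) with
      | none => rw [faceBelow_succ_of_none hg, faceBelow_succ_of_none (hfg.trans hg), ih]
      | some ε =>
        rw [faceBelow_succ_of_some hg, faceBelow_succ_of_some (hfg.trans hg), ← ih]
        exact congrArg _ (faceAt_faceBelow ε 0 c)

end faceBelow

/-- The face `d_f(c)` of a cube `c`, with signs `f` indexed by `ℕ` so that they need not be
reindexed when the dimension changes; only the values of `f` below the dimension matter. -/
def subface (K : PCS) (f : ℕ → Option Bool) (c : K.Cell) : K.Cell := K.faceBelow c.1 f c

lemma subface_congr {f g : ℕ → Option Bool} {c : K.Cell} (h : ∀ i < c.1, f i = g i) :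
    K.subface f c = K.subface g c :=
  faceBelow_congr h c

lemma dim_subface (f : ℕ → Option Bool) (c : K.Cell) : (K.subface f c).1 = starCount f c.1 :=
  Nat.add_right_cancel ((dim_faceBelow le_rfl).trans (Nat.add_comm _ _))

lemma subface_subface (f g : ℕ → Option Bool) (c : K.Cell) :
    K.subface g (K.subface f c) = K.subface (fillStars f g) c := by
  change K.faceBelow (K.subface f c).1 g (K.subface f c) = _
  rw [dim_subface]
  exact faceBelow_faceBelow f g c.1 c

/-- The signs `f` read off at the stars of `g`: the signs of the face `f` inside the face `g`. -/
noncomputable def restrictToStars (f g : ℕ → Option Bool) (k : ℕ) : Option Bool :=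
  f (Nat.nth (fun i ↦ g i = none) k)

lemma fillStars_restrictToStars {f g : ℕ → Option Bool} {i : ℕ} (h : g i = none ∨ f i = g i) :
    fillStars g (restrictToStars f g) i = f i := by
  unfold fillStars restrictToStars starCount
  split_ifs with hg
  · rw [Nat.nth_count (p := fun i ↦ g i = none) hg]
  · exact (h.resolve_left hg).symm

lemma subface_restrictToStars {f g : ℕ → Option Bool} {c : K.Cell}
    (h : ∀ i < c.1, g i = none ∨ f i = g i) :
    K.subface (restrictToStars f g) (K.subface g c) = K.subface f c := by
  rw [subface_subface]
  exact subface_congr fun i hi ↦ fillStars_restrictToStars (h i hi)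

/-- The vertex of `c` at the corner `S` of the cube. -/
def vertex (K : PCS) (S : ℕ → Bool) (c : K.Cell) : K.Cell := K.subface (fun i ↦ some (S i)) c

/-- The extreme vertex `dᵉ(c)`, as a cell. -/
abbrev corner (K : PCS) (ε : Bool) (c : K.Cell) : K.Cell := K.vertex (fun _ ↦ ε) c

lemma corner_subface (ε : Bool) (f : ℕ → Option Bool) (c : K.Cell) :
    K.corner ε (K.subface f c) = K.vertex (fun i ↦ (f i).getD ε) c := by
  unfold corner vertex
  rw [subface_subface]
  refine subface_congr fun i _ ↦ ?_
  cases hf : f i <;> simp [fillStars, hf]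

lemma corner_vertex (ε : Bool) (S : ℕ → Bool) (c : K.Cell) :
    K.corner ε (K.vertex S c) = K.vertex S c :=
  corner_subface ε _ c

lemma dim_vertex (S : ℕ → Bool) (c : K.Cell) : (K.vertex S c).1 = 0 := by
  simp [vertex, dim_subface, starCount, Nat.count_false]

/-- The signs of the face of a cube spanned by its corners `S ≤ T`. -/
def intervalSigns (S T : ℕ → Bool) (i : ℕ) : Option Bool := if S i = T i then some (S i) else none

/-- The face of `c` spanned by its corners `S ≤ T`. -/
def interval (K : PCS) (S T : ℕ → Bool) (c : K.Cell) : K.Cell := K.subface (intervalSigns S T) c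

section interval

variable {S T : ℕ → Bool}

lemma corner_false_interval (hST : S ≤ T) (c : K.Cell) :
    K.corner false (K.interval S T c) = K.vertex S c := by
  rw [interval, corner_subface]
  refine subface_congr fun i _ ↦ congrArg some ?_
  have := Bool.le_iff_imp.1 (hST i)
  cases hS : S i <;> cases hT : T i <;> simp_all [intervalSigns]

lemma corner_true_interval (hST : S ≤ T) (c : K.Cell) :
    K.corner true (K.interval S T c) = K.vertex T c := by
  rw [interval, corner_subface]
  refine subface_congr fun i _ ↦ congrArg some ?_
  have := Bool.le_iff_imp.1 (hST i)
  cases hS : S i <;> cases hT : T i <;> simp_all [intervalSigns]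

lemma exists_vertex_interval (hST : S ≤ T) (V : ℕ → Bool) (c : K.Cell) :
    ∃ U ≤ T, K.vertex V (K.interval S T c) = K.vertex U c := by
  refine ⟨fun i ↦ if S i = T i then S i else V (starCount (intervalSigns S T) i), fun i ↦ ?_, ?_⟩
  · have := Bool.le_iff_imp.1 (hST i)
    cases hS : S i <;> cases hT : T i <;> simp_all
  · unfold vertex interval
    rw [subface_subface]
    refine subface_congr fun i _ ↦ ?_
    by_cases h : S i = T i <;> simp [fillStars, intervalSigns, h]

end interval

/-- `e` is a face of `c`, of any codimension. -/
def IsFace (e c : K.Cell) : Prop := ∃ f, e = K.subface f c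

lemma IsFace.trans {a b c : K.Cell} (hab : IsFace a b) (hbc : IsFace b c) : IsFace a c := by
  obtain ⟨f, rfl⟩ := hab
  obtain ⟨g, rfl⟩ := hbc
  exact ⟨_, subface_subface g f c⟩

lemma isFace_corner (ε : Bool) (c : K.Cell) : IsFace (K.corner ε c) c := ⟨_, rfl⟩

lemma isFace_interval (S T : ℕ → Bool) (c : K.Cell) : IsFace (K.interval S T c) c := ⟨_, rfl⟩

lemma isFace_interval_interval {S T S' T' : ℕ → Bool} (hS : S ≤ S') (hST : S' ≤ T') (hT : T' ≤ T)
    (c : K.Cell) : IsFace (K.interval S' T' c) (K.interval S T c) := by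
  refine ⟨_, (subface_restrictToStars fun i _ ↦ ?_).symm⟩
  have hS := Bool.le_iff_imp.1 (hS i)
  have hST := Bool.le_iff_imp.1 (hST i)
  have hT := Bool.le_iff_imp.1 (hT i)
  cases h₁ : S i <;> cases h₂ : T i <;> cases h₃ : S' i <;> cases h₄ : T' i <;>
    simp_all [intervalSigns]

lemma IsFace.exists_interval {e c : K.Cell} (h : IsFace e c) :
    ∃ S T : ℕ → Bool, S ≤ T ∧ e = K.interval S T c := by
  obtain ⟨f, rfl⟩ := h
  refine ⟨fun i ↦ (f i).getD false, fun i ↦ (f i).getD true, fun i ↦ ?_,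
    subface_congr fun i _ ↦ ?_⟩
  · cases hf : f i <;> simp [hf]
  · cases hf : f i <;> simp [intervalSigns, hf]

lemma IsFace.exists_corner_eq_vertex {e c : K.Cell} (h : IsFace e c) (ε : Bool) :
    ∃ S, K.corner ε e = K.vertex S c := by
  obtain ⟨f, rfl⟩ := h
  exact ⟨_, corner_subface ε f c⟩

lemma cell_cast {m n : ℕ} (h : m = n) (h' : K.cube m = K.cube n) (c : K.cube m) :
    (⟨n, cast h' c⟩ : K.Cell) = ⟨m, c⟩ := by
  subst h
  rfl

/-- Extension of a finite sequence to `ℕ` by a default value. -/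
def extend {γ : Type*} {n : ℕ} (a : γ) (x : Fin n → γ) (i : ℕ) : γ :=
  if h : i < n then x ⟨i, h⟩ else a

lemma extend_of_lt {γ : Type*} {n : ℕ} (a : γ) (x : Fin n → γ) {i : ℕ} (h : i < n) :
    extend a x i = x ⟨i, h⟩ :=
  dif_pos h

lemma cell_dfaceAux (n k : ℕ) (f : Fin n → Option Bool) (c : K.cube (n + k)) :
    (⟨numStars f + k, K.dfaceAux n k f c⟩ : K.Cell) =
      K.faceBelow n (extend none f) ⟨n + k, c⟩ := by
  induction n generalizing k with
  | zero => exact cell_cast (by simp [numStars]) _ c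
  | succ n ih =>
    have hlast : extend none f n = f (Fin.last n) := extend_of_lt _ _ n.lt_succ_self
    have hinit (d : K.Cell) :
        K.faceBelow n (extend none (f ∘ Fin.castSucc)) d = K.faceBelow n (extend none f) d := by
      refine faceBelow_congr (fun i hi ↦ ?_) d
      rw [extend_of_lt _ _ hi, extend_of_lt _ _ (Nat.lt_succ_of_lt hi)]
      rfl
    rw [dfaceAux]
    split
    next ε h =>
      rw [cell_cast (by rw [numStars_castSucc f, h]; simp), ih, hinit,
        faceBelow_succ_of_some (hlast.trans h), ← faceAt_of_lt, cell_cast (by omega)]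
    next h =>
      rw [cell_cast (by rw [numStars_castSucc f, h]; simp; omega), ih, hinit,
        faceBelow_succ_of_none (hlast.trans h), cell_cast (by omega)]

lemma cell_dface {n : ℕ} (f : Fin n → Option Bool) (c : K.cube n) :
    (⟨numStars f, K.dface f c⟩ : K.Cell) = K.subface (extend none f) ⟨n, c⟩ := by
  rw [dface, cell_cast (by omega)]
  exact cell_dfaceAux n 0 f _

lemma cell_extreme (ε : Bool) {n : ℕ} (c : K.cube n) :
    (⟨0, K.extreme ε c⟩ : K.Cell) = K.corner ε ⟨n, c⟩ := by
  rw [extreme, cell_cast (by simp [numStars]), cell_dface]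
  exact subface_congr fun i hi ↦ extend_of_lt _ _ hi

lemma extreme_eq_extreme_iff {ε η : Bool} {m n : ℕ} {a : K.cube m} {b : K.cube n} :
    K.extreme ε a = K.extreme η b ↔ K.corner ε ⟨m, a⟩ = K.corner η ⟨n, b⟩ := by
  rw [← cell_extreme, ← cell_extreme]
  exact ⟨fun h ↦ h ▸ rfl, fun h ↦ eq_of_heq (Sigma.mk.inj h).2⟩

lemma Proper.eq_of_corner_eq (hK : K.Proper) {a b : K.Cell}
    (h₀ : K.corner false a = K.corner false b) (h₁ : K.corner true a = K.corner true b) :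
    a = b := by
  apply hK
  simp only [extreme_eq_extreme_iff.2 h₀, extreme_eq_extreme_iff.2 h₁]

/-- `u ≤ v` in the cube `c`: some face of `c` has lower vertex `u` and upper vertex `v`. -/
def Precedes (c u v : K.Cell) : Prop :=
  ∃ e, IsFace e c ∧ K.corner false e = u ∧ K.corner true e = v

lemma Proper.interval_bot_congr (hK : K.Proper) {S T : ℕ → Bool} {c : K.Cell}
    (h : K.vertex S c = K.vertex T c) : K.interval ⊥ S c = K.interval ⊥ T c :=
  hK.eq_of_corner_eq
    ((corner_false_interval bot_le c).trans (corner_false_interval bot_le c).symm)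
    ((corner_true_interval bot_le c).trans (h.trans (corner_true_interval bot_le c).symm))

-- Distinct corners of `c` may be the same vertex of `K`, so `U ≤ S` has to be arranged.
lemma Precedes.exists_le (hK : K.Proper) {c u : K.Cell} {S : ℕ → Bool}
    (h : Precedes c u (K.vertex S c)) : ∃ U ≤ S, u = K.vertex U c := by
  obtain ⟨e, he, rfl, he₁⟩ := h
  obtain ⟨V, T, hVT, rfl⟩ := he.exists_interval
  rw [corner_true_interval hVT] at he₁
  have hface : IsFace (K.interval V T c) (K.interval ⊥ S c) :=
    hK.interval_bot_congr he₁ ▸ isFace_interval_interval bot_le hVT le_rfl c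
  obtain ⟨W, hW⟩ := hface.exists_corner_eq_vertex false
  obtain ⟨U, hUS, hU⟩ := exists_vertex_interval (bot_le : ⊥ ≤ S) W c
  exact ⟨U, hUS, hW.trans hU⟩

lemma Precedes.trans (hK : K.Proper) {c u v w : K.Cell} (huv : Precedes c u v)
    (hvw : Precedes c v w) : Precedes c u w := by
  obtain ⟨e, he, rfl, rfl⟩ := hvw
  obtain ⟨S, T, hST, rfl⟩ := he.exists_interval
  rw [corner_false_interval hST] at huv
  obtain ⟨U, hUS, rfl⟩ := huv.exists_le hK
  have hUT := hUS.trans hST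
  exact ⟨K.interval U T c, isFace_interval U T c, corner_false_interval hUT c,
    by rw [corner_true_interval hUT, corner_true_interval hST]⟩

lemma IsFace.precedes_self {e c : K.Cell} (h : IsFace e c) (ε : Bool) :
    Precedes c (K.corner ε e) (K.corner ε e) :=
  ⟨K.corner ε e, (isFace_corner ε e).trans h, corner_vertex _ _ _, corner_vertex _ _ _⟩

lemma IsFace.of_precedes (hK : K.Proper) {e c q : K.Cell} (he : IsFace e c)
    (hpre : Precedes c (K.corner false q) (K.corner false e))
    (hq : K.corner true q = K.corner true c) : IsFace e q := by
  obtain ⟨S, T, hST, rfl⟩ := he.exists_interval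
  rw [corner_false_interval hST] at hpre
  obtain ⟨U, hUS, hU⟩ := hpre.exists_le hK
  have hqU : q = K.interval U ⊤ c := hK.eq_of_corner_eq
    (hU.trans (corner_false_interval le_top c).symm)
    (hq.trans (corner_true_interval le_top c).symm)
  exact hqU ▸ isFace_interval_interval hUS hST le_top c

/-! ### Carriers of points -/

section extend

variable {γ : Type*} {n : ℕ} (a b : γ) (i : Fin (n + 1)) (x : Fin n → γ)

lemma extend_insertNth_self :
    extend a (i.insertNth b x : Fin (n + 1) → γ) i = b := by
  rw [extend_of_lt _ _ i.2]
  exact Fin.insertNth_apply_same (α := fun _ ↦ γ) i b x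

lemma extend_insertNth_of_lt {k : ℕ} (h : k < i) :
    extend a (i.insertNth b x : Fin (n + 1) → γ) k = extend a x k := by
  have hk : k < n := by omega
  rw [extend_of_lt _ _ hk, extend_of_lt _ _ (Nat.lt_succ_of_lt hk)]
  have := Fin.insertNth_apply_succAbove (α := fun _ ↦ γ) i b x ⟨k, hk⟩
  rwa [Fin.succAbove_of_castSucc_lt i ⟨k, hk⟩ h] at this

lemma extend_insertNth_succ_of_le {k : ℕ} (h : i ≤ k) (hk : k < n) :
    extend a (i.insertNth b x : Fin (n + 1) → γ) (k + 1) = extend a x k := by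
  rw [extend_of_lt _ _ hk, extend_of_lt _ _ (Nat.succ_lt_succ hk)]
  have := Fin.insertNth_apply_succAbove (α := fun _ ↦ γ) i b x ⟨k, hk⟩
  rwa [Fin.succAbove_of_le_castSucc i ⟨k, hk⟩ h] at this

end extend

/-- The point of `|K|` with coordinates `x` in the cube `c`. -/
abbrev point (K : PCS) {n : ℕ} (c : K.cube n) (x : Fin n → unitInterval) : K.Geo :=
  Quot.mk K.geoRel ⟨n, c, x⟩

lemma point_face {n : ℕ} (ε : Bool) (i : Fin (n + 1)) (c : K.cube (n + 1))
    (x : Fin n → unitInterval) :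
    K.point (K.face ε i c) x = K.point c (i.insertNth (if ε then 1 else 0) x) :=
  Quot.sound ⟨n, ε, i, c, x, Or.inl ⟨rfl, rfl⟩⟩

/-- The corner of the cube that marks the coordinates of `x` equal to `1`: the lower corner of the
smallest face of the cube containing `x`. -/
noncomputable def ones {n : ℕ} (x : Fin n → unitInterval) (i : ℕ) : Bool :=
  decide (extend 0 x i = 1)

/-- The corner of the cube that marks the nonzero coordinates of `x`: the upper corner of the
smallest face of the cube containing `x`. -/
noncomputable def support {n : ℕ} (x : Fin n → unitInterval) (i : ℕ) : Bool :=
  decide (extend 0 x i ≠ 0)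

section coordinates

variable {n : ℕ} {x y : Fin n → unitInterval}

lemma ones_le_support (x : Fin n → unitInterval) : ones x ≤ support x := fun i ↦ by
  simp +contextual [ones, support, Bool.le_iff_imp]

lemma ones_le_ones (h : ∀ i, x i = 1 → y i = 1) : ones x ≤ ones y := fun i ↦ by
  by_cases hi : i < n
  · simpa [ones, extend, hi, Bool.le_iff_imp] using h ⟨i, hi⟩
  · simp [ones, extend, hi]

lemma support_le_support (h : ∀ i, x i ≠ 0 → y i ≠ 0) : support x ≤ support y := fun i ↦ by
  by_cases hi : i < n
  · simpa [support, extend, hi, Bool.le_iff_imp, not_imp_not] using h ⟨i, hi⟩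
  · simp [support, extend, hi]

end coordinates

/-- The smallest face of `c` whose geometric cube contains the point with coordinates `x`. -/
noncomputable def carrierIn (K : PCS) {n : ℕ} (c : K.cube n) (x : Fin n → unitInterval) : K.Cell :=
  K.interval (ones x) (support x) ⟨n, c⟩

lemma carrierIn_face {n : ℕ} (ε : Bool) (i : Fin (n + 1)) (c : K.cube (n + 1))
    (x : Fin n → unitInterval) :
    K.carrierIn (K.face ε i c) x = K.carrierIn c (i.insertNth (if ε then 1 else 0) x) := by
  unfold carrierIn interval
  rw [← faceAt_of_lt ε c i.2]
  change K.faceBelow (K.faceAt ε i ⟨n + 1, c⟩).1 _ _ = _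
  rw [Nat.add_right_cancel (dim_faceAt_add_one ε (c := ⟨n + 1, c⟩) i.2)]
  refine faceBelow_faceAt (Nat.lt_succ_iff.1 i.2) (fun k hk ↦ ?_) ?_ (fun k hk hkn ↦ ?_) _
  · unfold intervalSigns ones support
    rw [extend_insertNth_of_lt _ _ i x hk]
  · cases ε <;> simp [intervalSigns, ones, support, extend_insertNth_self]
  · unfold intervalSigns ones support
    rw [extend_insertNth_succ_of_le _ _ i x hk hkn]

/-- The carrier of a point of `|K|`: the smallest cube of `K` containing it. -/
noncomputable def carrier (z : K.Geo) : K.Cell :=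
  Quot.lift (fun p : K.Pre ↦ K.carrierIn p.2.1 p.2.2) (by
    rintro _ _ ⟨n, ε, i, c, x, ⟨rfl, rfl⟩ | ⟨rfl, rfl⟩⟩
    · exact carrierIn_face ε i c x
    · exact (carrierIn_face ε i c x).symm) z

lemma isFace_carrier_point {n : ℕ} (c : K.cube n) (x : Fin n → unitInterval) :
    IsFace (carrier (K.point c x)) ⟨n, c⟩ :=
  isFace_interval _ _ _

lemma carrier_point_of_interior {n : ℕ} (c : K.cube n) {x : Fin n → unitInterval}
    (h₀ : ∀ i, x i ≠ 0) (h₁ : ∀ i, x i ≠ 1) : carrier (K.point c x) = ⟨n, c⟩ :=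
  (subface_congr fun i (hi : i < n) ↦ by
    simp [intervalSigns, ones, support, extend_of_lt _ _ hi, h₀, h₁]).trans (faceBelow_none n _)

lemma point_mem_cubeSet_carrier {n : ℕ} (c : K.cube n) (x : Fin n → unitInterval) :
    K.point c x ∈ K.cubeSet (carrier (K.point c x)).2 := by
  induction n with
  | zero => exact ⟨x, rfl⟩
  | succ n ih =>
    by_cases hx : ∃ i, ∃ ε : Bool, x i = if ε then 1 else 0
    · obtain ⟨i, ε, hi⟩ := hx
      rw [← i.insertNth_self_removeNth x, hi, ← point_face]
      exact ih _ _
    · push Not at hx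
      rw [carrier_point_of_interior c (fun i ↦ hx i false) fun i ↦ hx i true]
      exact ⟨x, rfl⟩

lemma cubeSet_faceAt_subset (ε : Bool) (i : ℕ) (c : K.Cell) :
    K.cubeSet (K.faceAt ε i c).2 ⊆ K.cubeSet c.2 := by
  rcases le_or_gt c.1 i with h | h
  · rw [faceAt_of_le ε h]
  · obtain ⟨_ | n, c⟩ := c
    · exact absurd h (Nat.not_lt_zero i)
    · rw [faceAt_of_lt ε c h]
      rintro _ ⟨x, rfl⟩
      exact ⟨_, (point_face ε ⟨i, h⟩ c x).symm⟩

lemma cubeSet_faceBelow_subset (n : ℕ) (f : ℕ → Option Bool) (c : K.Cell) :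
    K.cubeSet (K.faceBelow n f c).2 ⊆ K.cubeSet c.2 := by
  induction n generalizing c with
  | zero => exact subset_rfl
  | succ n ih =>
    cases hf : f n with
    | none => exact faceBelow_succ_of_none hf c ▸ ih c
    | some ε =>
      exact faceBelow_succ_of_some hf c ▸ (ih _).trans (cubeSet_faceAt_subset ε n c)

lemma IsFace.cubeSet_subset {e c : K.Cell} (h : IsFace e c) : K.cubeSet e.2 ⊆ K.cubeSet c.2 := by
  obtain ⟨f, rfl⟩ := h
  exact cubeSet_faceBelow_subset _ f c

lemma mem_cubeSet_iff {z : K.Geo} {c : K.Cell} : z ∈ K.cubeSet c.2 ↔ IsFace (carrier z) c := by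
  refine ⟨?_, fun h ↦ h.cubeSet_subset ?_⟩
  · rintro ⟨x, rfl⟩
    exact isFace_carrier_point c.2 x
  · obtain ⟨⟨n, c, x⟩, rfl⟩ := Quot.exists_rep z
    exact point_mem_cubeSet_carrier c x

/-- The lower vertex of the carrier of a point of `|K|`. -/
noncomputable def lowerVertex (z : K.Geo) : K.Cell := K.corner false (carrier z)

lemma lowerVertex_point {n : ℕ} (c : K.cube n) (x : Fin n → unitInterval) :
    lowerVertex (K.point c x) = K.vertex (ones x) ⟨n, c⟩ :=
  corner_false_interval (ones_le_support x) _

lemma precedes_lowerVertex {n : ℕ} {c : K.cube n} {x y : Fin n → unitInterval}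
    (h₁ : ones x ≤ ones y) (h₀ : support y ≤ support x) {d : K.Cell}
    (hd : IsFace (carrier (K.point c x)) d) :
    Precedes d (lowerVertex (K.point c x)) (lowerVertex (K.point c y)) := by
  rw [lowerVertex_point, lowerVertex_point]
  have hface := isFace_interval_interval le_rfl h₁ ((ones_le_support y).trans h₀) ⟨n, c⟩
  exact ⟨_, hface.trans hd, corner_false_interval h₁ _, corner_true_interval h₁ _⟩

open Set Filter Topology

/-! ### Natural paths -/

lemma exists_castSucc_and_not_succ {m : ℕ} {p : Fin (m + 1) → Prop} (h₀ : p 0)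
    (hlast : ¬ p (Fin.last m)) : ∃ j : Fin m, p j.castSucc ∧ ¬ p j.succ := by
  by_contra! hstep
  exact hlast (Fin.induction (motive := p) h₀ hstep _)

lemma continuousOn_of_monotoneOn_of_add_sum_eq {ι : Type*} [Fintype ι] {I : Set ℝ}
    {f : ι → ℝ → ℝ} {a : ℝ} (hmono : ∀ i, MonotoneOn (f i) I)
    (hsum : ∀ s ∈ I, a + ∑ i, f i s = s) (i : ι) : ContinuousOn (f i) I := by
  refine (LipschitzOnWith.of_le_add_mul 1 fun t ht s hs ↦ ?_).continuousOn
  rw [NNReal.coe_one, one_mul, ← sub_le_iff_le_add']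
  rcases le_total s t with hst | hts
  · calc
      f i t - f i s ≤ ∑ j, (f j t - f j s) :=
        Finset.single_le_sum (f := fun j ↦ f j t - f j s)
          (fun j _ ↦ sub_nonneg.2 (hmono j hs ht hst)) (Finset.mem_univ i)
      _ = t - s := by rw [Finset.sum_sub_distrib]; linarith [hsum s hs, hsum t ht]
      _ ≤ dist t s := le_abs_self _
  · exact (sub_nonpos.2 (hmono i ht hs hts)).trans dist_nonneg

/-- On `I`, the path `α` runs in the cube `c`, with the nondecreasing coordinates `x`. -/
structure IsLiftOn (α : ℝ → K.Geo) (I : Set ℝ) {n : ℕ} (c : K.cube n)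
    (x : ℝ → Fin n → unitInterval) : Prop where
  monotoneOn : ∀ i, MonotoneOn (fun s ↦ (x s i : ℝ)) I
  eq_point : ∀ s ∈ I, α s = K.point c (x s)

lemma IsLiftOn.mono {α : ℝ → K.Geo} {I J : Set ℝ} {n : ℕ} {c : K.cube n}
    {x : ℝ → Fin n → unitInterval} (hx : IsLiftOn α I c x) (hJI : J ⊆ I) : IsLiftOn α J c x :=
  ⟨fun i ↦ (hx.monotoneOn i).mono hJI, fun s hs ↦ hx.eq_point s (hJI hs)⟩

section paths

variable {h : ∀ {n : ℕ}, K.cube n → ℤ} {α : ℝ → K.Geo} {A B s : ℝ}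

lemma IsDPathOn.exists_isLiftOn_right (hα : K.IsDPathOn α A B) (hs : s ∈ Ico A B) :
    ∃ r, s < r ∧ r ≤ B ∧ ∃ (n : ℕ) (c : K.cube n) (x : ℝ → Fin n → unitInterval),
      IsLiftOn α (Icc s r) c x := by
  obtain ⟨-, m, t, ht, ht₀, htm, hpiece⟩ := hα
  obtain ⟨j, hj, hj'⟩ := exists_castSucc_and_not_succ (p := fun k ↦ t k ≤ s)
    (ht₀.trans_le hs.1) (not_le.2 (hs.2.trans_eq htm.symm))
  obtain ⟨n, c, x, hmono, heq⟩ := hpiece j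
  exact ⟨t j.succ, not_le.1 hj', (ht (Fin.le_last _)).trans_eq htm, n, c, x,
    IsLiftOn.mono ⟨hmono, heq⟩ (Icc_subset_Icc_left hj)⟩

lemma IsDPathOn.exists_isLiftOn_left (hα : K.IsDPathOn α A B) (hs : s ∈ Ioc A B) :
    ∃ r, r < s ∧ A ≤ r ∧ ∃ (n : ℕ) (c : K.cube n) (x : ℝ → Fin n → unitInterval),
      IsLiftOn α (Icc r s) c x := by
  obtain ⟨-, m, t, ht, ht₀, htm, hpiece⟩ := hα
  obtain ⟨j, hj, hj'⟩ := exists_castSucc_and_not_succ (p := fun k ↦ t k < s)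
    (ht₀.trans_lt hs.1) (not_lt.2 (hs.2.trans_eq htm.symm))
  obtain ⟨n, c, x, hmono, heq⟩ := hpiece j
  exact ⟨t j.castSucc, hj, ht₀.symm.trans_le (ht (Fin.zero_le _)), n, c, x,
    IsLiftOn.mono ⟨hmono, heq⟩ (Icc_subset_Icc_right (not_lt.1 hj'))⟩

lemma IsLiftOn.eventually_ne {I : Set ℝ} {n : ℕ} {c : K.cube n} {x : ℝ → Fin n → unitInterval}
    (hx : IsLiftOn α I c x) (hnat : K.NaturalOn h α A B) (hI : I ⊆ Icc A B) (hs : s ∈ I)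
    (a : unitInterval) : ∀ᶠ t in 𝓝[I] s, ∀ i, x s i ≠ a → x t i ≠ a := by
  have hcont : ∀ i, ContinuousOn (fun t ↦ (x t i : ℝ)) I :=
    continuousOn_of_monotoneOn_of_add_sum_eq hx.monotoneOn fun t ht ↦
      hnat t (hI ht) n c (x t) (hx.eq_point t ht).symm
  simp only [eventually_all, ne_eq, Subtype.ext_iff]
  exact fun i hi ↦ (hcont i s hs).eventually_ne hi

lemma NaturalOn.eventually_lowerVertex_eq (hnat : K.NaturalOn h α A B)
    (hα : K.IsDPathOn α A B) (hs : s ∈ Ico A B) :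
    ∀ᶠ t in 𝓝[>] s, lowerVertex (α t) = lowerVertex (α s) := by
  obtain ⟨r, hsr, hrB, n, c, x, hx⟩ := hα.exists_isLiftOn_right hs
  have hs' : s ∈ Icc s r := left_mem_Icc.2 hsr.le
  have hne := hx.eventually_ne hnat (Icc_subset_Icc hs.1 hrB) hs' 1
  filter_upwards [nhdsWithin_le_of_mem (Icc_mem_nhdsGT hsr) hne, Icc_mem_nhdsGT hsr] with t hne ht
  have hones : ones (x t) = ones (x s) :=
    le_antisymm (ones_le_ones fun i ↦ not_imp_not.1 (hne i)) <| ones_le_ones fun i hi ↦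
      top_unique (hi.symm.trans_le (hx.monotoneOn i hs' ht ht.1))
  rw [hx.eq_point t ht, hx.eq_point s hs', lowerVertex_point, lowerVertex_point, hones]

lemma NaturalOn.eventually_precedes_lowerVertex (hnat : K.NaturalOn h α A B)
    (hα : K.IsDPathOn α A B) (hs : s ∈ Ioc A B) :
    ∀ᶠ t in 𝓝[<] s, ∀ c, IsFace (carrier (α t)) c →
      Precedes c (lowerVertex (α t)) (lowerVertex (α s)) := by
  obtain ⟨r, hrs, hAr, n, c, x, hx⟩ := hα.exists_isLiftOn_left hs
  have hs' : s ∈ Icc r s := right_mem_Icc.2 hrs.le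
  have hne := hx.eventually_ne hnat (Icc_subset_Icc hAr hs.2) hs' 0
  filter_upwards [nhdsWithin_le_of_mem (Icc_mem_nhdsLT hrs) hne, Icc_mem_nhdsLT hrs] with t hne ht
  rw [hx.eq_point t ht, hx.eq_point s hs']
  have hones : ones (x t) ≤ ones (x s) := ones_le_ones fun i hi ↦
    top_unique (hi.symm.trans_le (hx.monotoneOn i ht hs' ht.2))
  exact fun _ ↦ precedes_lowerVertex hones (support_le_support hne)

lemma NaturalOn.isClosed_precedes_lowerVertex (hnat : K.NaturalOn h α A B)
    (hα : K.IsDPathOn α A B) (hK : K.Proper) {a b : ℝ} (ha : A ≤ a) (hb : b ≤ B) {c : K.Cell}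
    (hmaps : MapsTo α (Icc a b) (K.cubeSet c.2)) (u : K.Cell) :
    IsClosed ({t | Precedes c u (lowerVertex (α t))} ∩ Icc a b) := by
  refine isClosed_iff_frequently.2 fun t ht ↦ ?_
  have htab : t ∈ Icc a b :=
    isClosed_Icc.mem_of_frequently_of_tendsto (ht.mono fun _ hr ↦ hr.2) tendsto_id
  refine ⟨?_, htab⟩
  rw [← nhdsLT_sup_nhdsGE, ← Ioi_insert, nhdsWithin_insert, frequently_sup, frequently_sup,
    frequently_pure] at ht
  obtain hlt | heq | hgt := ht
  · obtain ⟨r, hr, hrt⟩ := (hlt.and_eventually self_mem_nhdsWithin).exists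
    have htAB : t ∈ Ioc A B := ⟨(ha.trans hr.2.1).trans_lt hrt, htab.2.trans hb⟩
    obtain ⟨r, hr, hrt⟩ := (hlt.and_eventually
      (hnat.eventually_precedes_lowerVertex hα htAB)).exists
    exact hr.1.trans hK (hrt c (mem_cubeSet_iff.1 (hmaps hr.2)))
  · exact heq.1
  · obtain ⟨r, hr, htr⟩ := (hgt.and_eventually self_mem_nhdsWithin).exists
    have htAB : t ∈ Ico A B := ⟨ha.trans htab.1, (htr.trans_le hr.2.2).trans_le hb⟩
    obtain ⟨r, hr, htr⟩ := (hgt.and_eventually (hnat.eventually_lowerVertex_eq hα htAB)).exists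
    exact htr.subst (motive := Precedes c u) hr.1

lemma NaturalOn.precedes_lowerVertex (hnat : K.NaturalOn h α A B) (hα : K.IsDPathOn α A B)
    (hK : K.Proper) {a b : ℝ} (ha : A ≤ a) (hb : b ≤ B) {c : K.Cell}
    (hmaps : MapsTo α (Icc a b) (K.cubeSet c.2)) (hs : s ∈ Icc a b) :
    Precedes c (lowerVertex (α a)) (lowerVertex (α s)) := by
  have hclosed := hnat.isClosed_precedes_lowerVertex hα hK ha hb hmaps (lowerVertex (α a))
  have hstart : Precedes c (lowerVertex (α a)) (lowerVertex (α a)) :=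
    (mem_cubeSet_iff.1 (hmaps (left_mem_Icc.2 (hs.1.trans hs.2)))).precedes_self false
  refine hclosed.Icc_subset_of_forall_mem_nhdsWithin hstart (fun t ht ↦ ?_) hs
  filter_upwards [hnat.eventually_lowerVertex_eq hα ⟨ha.trans ht.2.1, ht.2.2.trans_le hb⟩]
    with r hr
  exact hr.symm.subst (motive := Precedes c _) ht.1

end paths

section height

variable {h : ∀ {n : ℕ}, K.cube n → ℤ} {α : ℝ → K.Geo} {A B : ℝ}

lemma IsHeight.height_faceAt (hh : K.IsHeight h) (ε : Bool) {i : ℕ} {c : K.Cell} (hi : i < c.1) :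
    h (K.faceAt ε i c).2 = h c.2 + if ε then 1 else 0 := by
  obtain ⟨_ | n, c⟩ := c
  · exact absurd hi (Nat.not_lt_zero i)
  · rw [faceAt_of_lt ε c hi]
    exact hh ε ⟨i, hi⟩ c

lemma IsHeight.height_faceBelow (hh : K.IsHeight h) (ε : Bool) {n : ℕ} {c : K.Cell}
    (hn : n ≤ c.1) :
    h (K.faceBelow n (fun _ ↦ some ε) c).2 = h c.2 + if ε then (n : ℤ) else 0 := by
  induction n generalizing c with
  | zero => simp [faceBelow]
  | succ n ih =>
    have hdim := dim_faceAt_add_one ε hn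
    rw [faceBelow_succ_of_some rfl, ih (by omega), hh.height_faceAt ε hn]
    cases ε <;> simp
    ring

lemma IsHeight.height_corner_false (hh : K.IsHeight h) (c : K.Cell) :
    h (K.corner false c).2 = h c.2 :=
  (hh.height_faceBelow false le_rfl).trans (add_zero _)

lemma IsHeight.height_corner_true (hh : K.IsHeight h) (c : K.Cell) :
    h (K.corner true c).2 = h c.2 + c.1 :=
  hh.height_faceBelow true le_rfl

lemma NaturalOn.carrier_eq_corner_true (hnat : K.NaturalOn h α A B) {c : K.Cell} {s : ℝ}
    (hs : s ∈ Icc A B) (hαs : α s ∈ K.cubeSet c.2) (htop : (h c.2 : ℝ) + c.1 = s) :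
    carrier (α s) = K.corner true c := by
  obtain ⟨x, hx⟩ := hαs
  have hsum : ∑ i, (x i : ℝ) = ∑ _i : Fin c.1, (1 : ℝ) := by
    rw [Finset.sum_const, Finset.card_fin, nsmul_one]
    linarith [hnat s hs c.1 c.2 x hx]
  have hone : ∀ i, x i = 1 := fun i ↦ Subtype.ext <|
    (Finset.sum_eq_sum_iff_of_le fun i _ ↦ (x i).2.2).1 hsum i (Finset.mem_univ i)
  rw [← hx]
  exact subface_congr fun i (hi : i < c.1) ↦ by
    simp [intervalSigns, ones, support, extend_of_lt _ _ hi, hone]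

/-- The path `α` runs through the cube `c` on the height interval of `c`. This expresses `liesIn`
cube by cube, without the partial sums `b_k`. -/
def Traverses (h : ∀ {n : ℕ}, K.cube n → ℤ) (α : ℝ → K.Geo) (c : K.Cell) : Prop :=
  MapsTo α (Icc (h c.2) (h c.2 + c.1)) (K.cubeSet c.2)

lemma Traverses.lowerVertex_eq {c : K.Cell} (hc : Traverses h α c) (hnat : K.NaturalOn h α A B)
    (htop : (h c.2 + c.1 : ℝ) ∈ Icc A B) : lowerVertex (α (h c.2 + c.1)) = K.corner true c := by
  have hmem := hc (right_mem_Icc.2 (le_add_of_nonneg_right (Nat.cast_nonneg c.1)))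
  rw [lowerVertex, hnat.carrier_eq_corner_true htop hmem rfl]
  exact corner_vertex _ _ _

/-- The faces `x` and `q` of `y` meet in a vertex and together connect the extreme vertices of
`y`. -/
structure IsSplitting (y x q : K.Cell) : Prop where
  isFace_left : IsFace x y
  isFace_right : IsFace q y
  corner_false : K.corner false x = K.corner false y
  corner_middle : K.corner false q = K.corner true x
  corner_true : K.corner true q = K.corner true y

namespace IsSplitting

variable {x y q : K.Cell}

lemma height_left (hs : IsSplitting y x q) (hh : K.IsHeight h) : h x.2 = h y.2 := by
  rw [← hh.height_corner_false x, hs.corner_false, hh.height_corner_false y]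

lemma height_right (hs : IsSplitting y x q) (hh : K.IsHeight h) : h q.2 = h x.2 + x.1 := by
  rw [← hh.height_corner_false q, hs.corner_middle, hh.height_corner_true x]

lemma height_top (hs : IsSplitting y x q) (hh : K.IsHeight h) :
    h q.2 + q.1 = h y.2 + y.1 := by
  rw [← hh.height_corner_true q, hs.corner_true, hh.height_corner_true y]

lemma traverses (hs : IsSplitting y x q) (hh : K.IsHeight h) (hx : Traverses h α x)
    (hq : Traverses h α q) : Traverses h α y := by
  intro s hsy
  rcases le_total s (h x.2 + x.1) with hsx | hsx
  · have hyx : (h y.2 : ℝ) = h x.2 := by exact_mod_cast (hs.height_left hh).symm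
    exact hs.isFace_left.cubeSet_subset (hx ⟨hyx.symm.trans_le hsy.1, hsx⟩)
  · have hxq : (h x.2 + x.1 : ℝ) = h q.2 := by exact_mod_cast (hs.height_right hh).symm
    have htop : (h y.2 + y.1 : ℝ) = h q.2 + q.1 := by exact_mod_cast (hs.height_top hh).symm
    exact hs.isFace_right.cubeSet_subset (hq ⟨hxq.symm.trans_le hsx, hsy.2.trans_eq htop⟩)

-- The lower vertex of the carrier of `α` is `corner true x` at the end of `x`, and it can only
-- move up inside `y` afterwards, so that the carrier stays a face of `q`.
lemma traverses_right (hs : IsSplitting y x q) (hh : K.IsHeight h) (hK : K.Proper)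
    (hα : K.IsDPathOn α A B) (hnat : K.NaturalOn h α A B) (hA : A ≤ h y.2)
    (hB : (h y.2 + y.1 : ℝ) ≤ B) (hx : Traverses h α x) (hy : Traverses h α y) :
    Traverses h α q := by
  have hxq : (h x.2 + x.1 : ℝ) = h q.2 := by exact_mod_cast (hs.height_right hh).symm
  have htop : (h q.2 + q.1 : ℝ) = h y.2 + y.1 := by exact_mod_cast hs.height_top hh
  have hyq : (h y.2 : ℝ) ≤ h q.2 := by
    rw [← hxq, hs.height_left hh]
    exact le_add_of_nonneg_right (Nat.cast_nonneg _)
  have hqtop : (h q.2 : ℝ) ≤ h q.2 + q.1 := le_add_of_nonneg_right (Nat.cast_nonneg _)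
  have hmaps : MapsTo α (Icc (h q.2) (h q.2 + q.1)) (K.cubeSet y.2) :=
    hy.mono_left (Icc_subset_Icc hyq htop.le)
  have hstart : lowerVertex (α (h q.2)) = K.corner false q := by
    rw [← hxq, hs.corner_middle]
    exact hx.lowerVertex_eq hnat
      (hxq ▸ ⟨hA.trans hyq, hqtop.trans (htop.le.trans hB)⟩)
  intro s hsq
  have hprec := hnat.precedes_lowerVertex hα hK (hA.trans hyq) (htop.le.trans hB) hmaps hsq
  rw [hstart] at hprec
  exact mem_cubeSet_iff.2
    ((mem_cubeSet_iff.1 (hmaps hsq)).of_precedes hK hprec hs.corner_true)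

end IsSplitting

end height

/-! ### Cube chains -/

lemma corner_of_dim_eq_zero (ε : Bool) {c : K.Cell} (hc : c.1 = 0) : K.corner ε c = c := by
  obtain ⟨_ | n, c⟩ := c
  · rfl
  · exact absurd hc n.succ_ne_zero

lemma isSplitting_interval (S : ℕ → Bool) (y : K.Cell) :
    IsSplitting y (K.interval ⊥ S y) (K.interval S ⊤ y) where
  isFace_left := isFace_interval _ _ y
  isFace_right := isFace_interval _ _ y
  corner_false := corner_false_interval bot_le y
  corner_middle := (corner_false_interval le_top y).trans (corner_true_interval bot_le y).symm
  corner_true := corner_true_interval le_top y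

/-- The cubes of positive dimension, as they occur in cube chains. -/
abbrev PosCell (K : PCS) : Type := Σ n, K.cube (n + 1)

/-- A cube of positive dimension, as a cell. -/
abbrev toCell (x : K.PosCell) : K.Cell := ⟨x.1 + 1, x.2⟩

lemma exists_toCell_eq {c : K.Cell} (hc : c.1 ≠ 0) : ∃ x : K.PosCell, toCell x = c := by
  obtain ⟨_ | n, c⟩ := c
  · exact absurd rfl hc
  · exact ⟨⟨n, c⟩, rfl⟩

lemma toCell_ne_vertex (x : K.PosCell) (S : ℕ → Bool) (c : K.Cell) : toCell x ≠ K.vertex S c :=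
  fun h ↦ x.1.succ_ne_zero ((congrArg Sigma.fst h).trans (dim_vertex S c))

lemma heq_dface {n : ℕ} {c : K.cube n} {f : Fin n → Option Bool} {g : ℕ → Option Bool}
    {x : K.PosCell} (hx : toCell x = K.subface g ⟨n, c⟩) (hfg : ∀ i : Fin n, f i = g i) :
    HEq x.2 (K.dface f c) := by
  have hface : K.subface g ⟨n, c⟩ = ⟨numStars f, K.dface f c⟩ := by
    rw [cell_dface]
    exact subface_congr fun i hi ↦ ((extend_of_lt _ _ hi).trans (hfg ⟨i, hi⟩)).symm
  exact (Sigma.mk.inj (hx.trans hface)).2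

lemma isSplit_of_eq_interval {x y q : K.PosCell} {S : ℕ → Bool}
    (hx : toCell x = K.interval ⊥ S (toCell y)) (hq : toCell q = K.interval S ⊤ (toCell y)) :
    K.IsSplit y.2 x q := by
  refine ⟨Finset.univ.filter fun i ↦ S i = true, fun hA ↦ ?_, fun hA ↦ ?_,
    heq_dface hx fun i ↦ ?_, heq_dface hq fun i ↦ ?_⟩
  · refine toCell_ne_vertex x ⊥ (toCell y) (hx.trans (subface_congr fun i hi ↦ ?_))
    have hSi := Finset.filter_eq_empty_iff.1 hA (Finset.mem_univ ⟨i, hi⟩)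
    simp [intervalSigns, hSi]
  · refine toCell_ne_vertex q ⊤ (toCell y) (hq.trans (subface_congr fun i hi ↦ ?_))
    have hSi := Finset.filter_eq_self.1 hA ⟨i, hi⟩ (Finset.mem_univ _)
    simp [intervalSigns, hSi]
  · cases hi : S i <;> simp [intervalSigns, hi]
  · cases hi : S i <;> simp [intervalSigns, hi]

lemma Proper.exists_isSplit (hK : K.Proper) {x y : K.PosCell} (hxy : x ≠ y)
    (h₀ : K.corner false (toCell x) = K.corner false (toCell y))
    (h₁ : IsFace (K.corner true (toCell x)) (toCell y)) :
    ∃ q : K.PosCell, K.IsSplit y.2 x q ∧ IsSplitting (toCell y) (toCell x) (toCell q) := by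
  obtain ⟨S, hS⟩ := h₁.exists_corner_eq_vertex true
  have hx : toCell x = K.interval ⊥ S (toCell y) := hK.eq_of_corner_eq
    (h₀.trans (corner_false_interval bot_le _).symm)
    ((corner_vertex _ _ _).symm.trans (hS.trans (corner_true_interval bot_le _).symm))
  have hsplit := hx ▸ isSplitting_interval S (toCell y)
  have hdim : (K.interval S ⊤ (toCell y)).1 ≠ 0 := fun hdim ↦ by
    have htop : K.corner true (toCell x) = K.corner true (toCell y) := by
      rw [← hsplit.corner_middle, ← hsplit.corner_true, corner_of_dim_eq_zero _ hdim,
        corner_of_dim_eq_zero _ hdim]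
    have heq := hK.eq_of_corner_eq h₀ htop
    apply hxy
    obtain ⟨m, x⟩ := x
    obtain ⟨n, y⟩ := y
    cases heq
    rfl
  obtain ⟨q, hq⟩ := exists_toCell_eq hdim
  exact ⟨q, isSplit_of_eq_interval hx hq, hq ▸ hsplit⟩

/-- The cube chain obtained by putting the cube `x` in front of a chain. -/
def consChain {u w : K.cube 0} (x : K.PosCell) (hx : K.extreme false x.2 = u)
    (c : CubeChain K (K.extreme true x.2) w) : CubeChain K u w :=
  ⟨x :: c.1, hx, c.2⟩

section chains

variable {u w : K.cube 0}

lemma chainLe_consChain {x : K.PosCell} (hx : K.extreme false x.2 = u)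
    {a b : CubeChain K (K.extreme true x.2) w} (hab : chainLe a b) :
    chainLe (consChain x hx a) (consChain x hx b) := by
  refine Relation.ReflTransGen.lift (consChain x hx) (fun a b ↦ ?_) a b hab
  rintro ⟨l₁, l₂, y, y₁, y₂, hb, ha, hy⟩
  exact ⟨x :: l₁, l₂, y, y₁, y₂, congrArg _ hb, congrArg _ ha, hy⟩

lemma chainLe_of_isSplit {a b : CubeChain K u w} {x q y : K.PosCell} {l : List K.PosCell}
    (ha : a.1 = x :: q :: l) (hb : b.1 = y :: l) (hs : K.IsSplit y.2 x q) : chainLe a b :=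
  Relation.ReflTransGen.single ⟨[], l, y, x, q, hb, ha, hs⟩

end chains

section heights

variable {h : ∀ {n : ℕ}, K.cube n → ℤ} {u w : K.cube 0}

lemma IsHeight.height_extreme_false (hh : K.IsHeight h) (x : K.PosCell) :
    h (K.extreme false x.2) = h x.2 := by
  have := hh.height_corner_false (toCell x)
  rwa [← cell_extreme] at this

lemma IsHeight.height_extreme_true (hh : K.IsHeight h) (x : K.PosCell) :
    h (K.extreme true x.2) = h x.2 + x.1 + 1 := by
  have := hh.height_corner_true (toCell x)
  rw [← cell_extreme] at this
  rw [this, Nat.cast_succ, add_assoc]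

lemma IsHeight.height_add_length_le (hh : K.IsHeight h) {cs : List K.PosCell}
    (hcs : K.chainFrom u cs w) : h u + cs.length ≤ h w := by
  induction cs generalizing u with
  | nil => simp [show u = w from hcs]
  | cons x l ih =>
    obtain ⟨rfl, hl⟩ := hcs
    have := ih hl
    rw [hh.height_extreme_true] at this
    rw [hh.height_extreme_false, List.length_cons]
    push_cast
    omega

lemma IsHeight.height_getElem (hh : K.IsHeight h) {cs : List K.PosCell}
    (hcs : K.chainFrom u cs w) {i : ℕ} (hi : i < cs.length) :
    (h cs[i].2 : ℝ) = h u + bsum cs i := by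
  induction cs generalizing u i with
  | nil => exact absurd hi (Nat.not_lt_zero i)
  | cons x l ih =>
    obtain ⟨rfl, hl⟩ := hcs
    cases i with
    | zero => simp [bsum, hh.height_extreme_false]
    | succ i =>
      have := ih hl (Nat.lt_of_succ_lt_succ hi)
      rw [List.getElem_cons_succ, this, hh.height_extreme_true, hh.height_extreme_false]
      simp [bsum]
      ring

lemma bsum_succ {cs : List K.PosCell} {i : ℕ} (hi : i < cs.length) :
    bsum cs (i + 1) = bsum cs i + (cs[i].1 + 1) := by
  rw [bsum, bsum, List.take_succ_eq_append_getElem hi, List.map_append, List.sum_append,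
    List.map_singleton, List.sum_singleton]

lemma IsHeight.liesIn_iff (hh : K.IsHeight h) (hu : h u = 0) (c : CubeChain K u w)
    (α : ℝ → K.Geo) : K.liesIn α c.1 ↔ ∀ x ∈ c.1, Traverses h α (toCell x) := by
  rw [List.forall_mem_iff_forall_getElem]
  refine forall₂_congr fun i hi ↦ ?_
  have hheight := hh.height_getElem c.2 hi
  rw [hu, Int.cast_zero, zero_add] at hheight
  rw [bsum_succ hi, ← hheight]
  simp only [Traverses, Nat.cast_succ, List.get_eq_getElem]

end heights

/-! ### The intersection of two cube chains -/

section meet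

variable {h : ∀ {n : ℕ}, K.cube n → ℤ} {α : ℝ → K.Geo} {A B : ℝ} {u w : K.cube 0}

lemma Traverses.isFace_corner_true {x y : K.Cell} (hx : Traverses h α x) (hy : Traverses h α y)
    (hnat : K.NaturalOn h α A B) (htop : (h x.2 + x.1 : ℝ) ∈ Icc A B) (hxy : h x.2 = h y.2)
    (hdim : x.1 ≤ y.1) : IsFace (K.corner true x) y := by
  have hx0 : (0 : ℝ) ≤ x.1 := Nat.cast_nonneg _
  have hdim : (x.1 : ℝ) ≤ y.1 := Nat.cast_le.2 hdim
  rw [← hnat.carrier_eq_corner_true htop (hx (right_mem_Icc.2 (by linarith))) rfl]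
  exact mem_cubeSet_iff.1 (hy ⟨by rw [hxy] at *; linarith, by rw [hxy]; linarith⟩)

/-- `m` is the intersection `c ∩ c'`: it refines both chains, and a natural path defined on `[A, B]`
lies in it if and only if it lies in both of them. -/
structure IsMeet (h : ∀ {n : ℕ}, K.cube n → ℤ) (A B : ℝ) (m c c' : CubeChain K u w) : Prop where
  le_left : chainLe m c
  le_right : chainLe m c'
  traverses_iff : ∀ β, K.IsDPathOn β A B → K.NaturalOn h β A B →
    ((∀ x ∈ m.1, Traverses h β (toCell x)) ↔
      (∀ x ∈ c.1, Traverses h β (toCell x)) ∧ ∀ x ∈ c'.1, Traverses h β (toCell x))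

namespace IsMeet

lemma symm {m c c' : CubeChain K u w} (hm : IsMeet h A B m c c') : IsMeet h A B m c' c :=
  ⟨hm.le_right, hm.le_left, fun β hβ hnat ↦ (hm.traverses_iff β hβ hnat).trans and_comm⟩

lemma refl (c : CubeChain K u w) : IsMeet h A B c c c :=
  ⟨Relation.ReflTransGen.refl, Relation.ReflTransGen.refl, fun _ _ _ ↦ (and_self_iff).symm⟩

lemma cons {x : K.PosCell} (hx : K.extreme false x.2 = u)
    {m c c' : CubeChain K (K.extreme true x.2) w} (hm : IsMeet h A B m c c') :
    IsMeet h A B (consChain x hx m) (consChain x hx c) (consChain x hx c') where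
  le_left := chainLe_consChain hx hm.le_left
  le_right := chainLe_consChain hx hm.le_right
  traverses_iff β hβ hnat := by
    simp only [consChain, List.forall_mem_cons, hm.traverses_iff β hβ hnat]
    tauto

lemma of_isSplitting (hh : K.IsHeight h) (hK : K.Proper) {m c c' c'' : CubeChain K u w}
    {x q y : K.PosCell} {l' : List K.PosCell} (hm : IsMeet h A B m c c'') (hx : x ∈ c.1)
    (hc'' : c''.1 = x :: q :: l') (hc' : c'.1 = y :: l') (hle : chainLe c'' c')
    (hs : IsSplitting (toCell y) (toCell x) (toCell q)) (hA : A ≤ h y.2)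
    (hB : (h y.2 + (y.1 + 1 : ℕ) : ℝ) ≤ B) : IsMeet h A B m c c' where
  le_left := hm.le_left
  le_right := hm.le_right.trans hle
  traverses_iff β hβ hnat := by
    rw [hm.traverses_iff β hβ hnat, hc'', hc']
    simp only [List.forall_mem_cons]
    refine and_congr_right fun hc ↦ ⟨fun ⟨hx, hq, hl'⟩ ↦ ⟨hs.traverses hh hx hq, hl'⟩,
      fun ⟨hy, hl'⟩ ↦ ⟨hc x hx, ?_, hl'⟩⟩
    exact hs.traverses_right hh hK hβ hnat hA hB (hc x hx) hy

end IsMeet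

lemma IsHeight.head_bounds (hh : K.IsHeight h) (hA : A ≤ h u) (hB : h w ≤ B) {x : K.PosCell}
    {l : List K.PosCell} (hc : K.chainFrom u (x :: l) w) :
    A ≤ h x.2 ∧ (h x.2 + (x.1 + 1 : ℕ) : ℝ) ≤ B := by
  obtain ⟨rfl, hl⟩ := hc
  rw [hh.height_extreme_false] at hA
  have hle := hh.height_add_length_le hl
  rw [hh.height_extreme_true] at hle
  have hle : h x.2 + (x.1 + 1 : ℕ) ≤ h w := by
    push_cast
    omega
  exact ⟨hA, le_trans (by exact_mod_cast hle) hB⟩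

lemma exists_split_tail (hK : K.Proper) (hh : K.IsHeight h) (hα : K.IsDPathOn α A B)
    (hnat : K.NaturalOn h α A B) (hA : A ≤ h u) (hB : h w ≤ B) {x y : K.PosCell}
    {l l' : List K.PosCell}
    (hc : K.chainFrom u (x :: l) w) (hc' : K.chainFrom u (y :: l') w)
    (hl : ∀ z ∈ x :: l, Traverses h α (toCell z)) (hl' : ∀ z ∈ y :: l', Traverses h α (toCell z))
    (hne : x ≠ y) (hdim : x.1 ≤ y.1) :
    ∃ d : CubeChain K (K.extreme true x.2) w, d.1.length = l'.length + 1 ∧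
      (∀ z ∈ d.1, Traverses h α (toCell z)) ∧
      ∀ m, IsMeet h A B m ⟨l, hc.2⟩ d →
        IsMeet h A B (consChain x hc.1 m) ⟨x :: l, hc⟩ ⟨y :: l', hc'⟩ := by
  obtain ⟨hx, -⟩ := List.forall_mem_cons.1 hl
  obtain ⟨hy, hl'⟩ := List.forall_mem_cons.1 hl'
  obtain ⟨hAx, hxB⟩ := hh.head_bounds hA hB hc
  obtain ⟨hAy, hyB⟩ := hh.head_bounds hA hB hc'
  have hxy : h x.2 = h y.2 := by
    rw [← hh.height_extreme_false, ← hh.height_extreme_false, hc.1, hc'.1]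
  have hface : IsFace (K.corner true (toCell x)) (toCell y) :=
    hx.isFace_corner_true hy hnat ⟨hAx.trans (le_add_of_nonneg_right (Nat.cast_nonneg _)), hxB⟩
      hxy (Nat.succ_le_succ hdim)
  obtain ⟨q, hsplit, hs⟩ := hK.exists_isSplit hne
    (extreme_eq_extreme_iff.1 (hc.1.trans hc'.1.symm)) hface
  have hq : K.chainFrom (K.extreme true x.2) (q :: l') w :=
    ⟨extreme_eq_extreme_iff.2 hs.corner_middle,
      extreme_eq_extreme_iff.2 hs.corner_true ▸ hc'.2⟩
  refine ⟨⟨q :: l', hq⟩, rfl, List.forall_mem_cons.2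
    ⟨hs.traverses_right hh hK hα hnat hAy hyB hx hy, hl'⟩, fun m hm ↦ ?_⟩
  exact (hm.cons hc.1).of_isSplitting hh hK List.mem_cons_self rfl rfl
    (chainLe_of_isSplit rfl rfl hsplit) hs hAy hyB

lemma IsHeight.le_height_extreme_true (hh : K.IsHeight h) (hA : A ≤ h u) {x : K.PosCell}
    (hx : K.extreme false x.2 = u) : A ≤ h (K.extreme true x.2) := by
  rw [← hx, hh.height_extreme_false] at hA
  rw [hh.height_extreme_true]
  push_cast
  linarith [(Nat.cast_nonneg x.1 : (0 : ℝ) ≤ x.1)]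

theorem exists_isMeet (hK : K.Proper) (hh : K.IsHeight h) (hα : K.IsDPathOn α A B)
    (hnat : K.NaturalOn h α A B) (hA : A ≤ h u) (hB : h w ≤ B) (c c' : CubeChain K u w)
    (hc : ∀ x ∈ c.1, Traverses h α (toCell x)) (hc' : ∀ x ∈ c'.1, Traverses h α (toCell x)) :
    ∃ m, IsMeet h A B m c c' := by
  induction hn : c.1.length + c'.1.length using Nat.strong_induction_on generalizing u with
  | _ n ih =>
  obtain ⟨l, hl⟩ := c
  obtain ⟨l', hl'⟩ := c'
  have hlen := hh.height_add_length_le hl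
  have hlen' := hh.height_add_length_le hl'
  match l, l' with
  | [], [] => exact ⟨_, IsMeet.refl _⟩
  | [], y :: l' =>
    obtain rfl : u = w := hl
    exact absurd hlen' (by simp)
  | x :: l, [] =>
    obtain rfl : u = w := hl'
    exact absurd hlen (by simp)
  | x :: l, y :: l' =>
    simp only [List.length_cons] at hn
    obtain ⟨-, hcl⟩ := List.forall_mem_cons.1 hc
    obtain ⟨-, hcl'⟩ := List.forall_mem_cons.1 hc'
    have hAx := hh.le_height_extreme_true hA hl.1
    have hAy := hh.le_height_extreme_true hA hl'.1
    by_cases hne : x = y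
    · subst hne
      obtain ⟨m, hm⟩ := ih _ (by dsimp only; omega) hAx ⟨l, hl.2⟩ ⟨l', hl'.2⟩ hcl hcl' rfl
      exact ⟨_, hm.cons hl.1⟩
    rcases le_total x.1 y.1 with hdim | hdim
    · obtain ⟨d, hd, hdα, hmeet⟩ :=
        exists_split_tail hK hh hα hnat hA hB hl hl' hc hc' hne hdim
      obtain ⟨m, hm⟩ := ih _ (by simp only [hd]; omega) hAx ⟨l, hl.2⟩ d hcl hdα rfl
      exact ⟨_, hmeet m hm⟩
    · obtain ⟨d, hd, hdα, hmeet⟩ :=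
        exists_split_tail hK hh hα hnat hA hB hl' hl hc' hc (Ne.symm hne) hdim
      obtain ⟨m, hm⟩ := ih _ (by simp only [hd]; omega) hAy ⟨l', hl'.2⟩ d hcl' hdα rfl
      exact ⟨_, (hmeet m hm).symm⟩

end meet

end PCS

theorem stmt9_general (K : PCS) (hK : K.Proper) (h : ∀ {n : ℕ}, K.cube n → ℤ)
    (hh : K.IsHeight h) (v w : K.cube 0) (N : ℕ) (hv : h v = 0) (hw : h w = N)
    (c c' : CubeChain K v w) (α : ℝ → K.Geo) (hα : K.IsDPathOn α 0 N)
    (hnat : K.NaturalOn h α 0 N) (h1 : K.liesIn α c.1) (h2 : K.liesIn α c'.1) :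
    ∃ cc : CubeChain K v w, chainLe cc c ∧ chainLe cc c' ∧
      ∀ β : ℝ → K.Geo, K.IsDPathOn β 0 N → K.NaturalOn h β 0 N →
        (K.liesIn β cc.1 ↔ K.liesIn β c.1 ∧ K.liesIn β c'.1) := by
  obtain ⟨m, hm⟩ := PCS.exists_isMeet hK hh hα hnat (by simp [hv]) (by simp [hw]) c c'
    ((hh.liesIn_iff hv c α).1 h1) ((hh.liesIn_iff hv c' α).1 h2)
  refine ⟨m, hm.le_left, hm.le_right, fun β hβ hβnat ↦ ?_⟩
  simp only [hh.liesIn_iff hv]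
  exact hm.traverses_iff β hβ hβnat

/-- If some natural tame path lies in both cube chains `c`
and `c'`, then there is a cube chain `c ∩ c'` from `v` to `w`, with
`c ∩ c' ≤ c` and `c ∩ c' ≤ c'`, such that a natural tame path lies in
`c ∩ c'` iff it lies in both `c` and `c'`. -/
theorem stmt9 (K : PCS) (hfin : Finite (Σ n, K.cube n)) (hK : K.Proper)
    (h : ∀ {n : ℕ}, K.cube n → ℤ) (hh : K.IsHeight h)
    (v w : K.cube 0) (N : ℕ) (hv : h v = 0) (hw : h w = N)
    (c c' : CubeChain K v w) (α : ℝ → K.Geo)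
    (hα : K.NatTamePath h v w N α) (h1 : K.liesIn α c.1) (h2 : K.liesIn α c'.1) :
    ∃ cc : CubeChain K v w, chainLe cc c ∧ chainLe cc c' ∧
      ∀ β : ℝ → K.Geo, K.NatTamePath h v w N β →
        (K.liesIn β cc.1 ↔ K.liesIn β c.1 ∧ K.liesIn β c'.1) := by
  obtain ⟨cc, hle, hle', hcc⟩ := stmt9_general K hK h hh v w N hv hw c c' α hα.1 hα.2.2.2.1 h1 h2
  exact ⟨cc, hle, hle', fun β hβ ↦ hcc β hβ.1 hβ.2.2.2.1⟩
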